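/- Let L be a type of formulas with a variable function var : L → Set V (each var(α) finite) where V is infinite, with variables embedded via an injection ι : V → L satisfying var(ι q) = {q}. Let ⊢ be a monotonic and transitive consequence relation on L such that ∅ ⊬ ι q for every q ∈ V. If there is no falsity constant for ⊢ (no β ∈ L with var(β) = ∅ such that {β} ⊢ γ for all γ ∈ L), then the left variable inclusion companion ⊢ˡ is NF-paraconsistent: there exists α ∈ L such that for every β ∈ L there is some γ ∈ L with {α, β} ⊬ˡ γ. -/

import Mathlib

/-- The set of variables occurring in a set of formulas. -/
def varSet {L V : Type*} (var : L → Set V) (Γ : Set L) : Set V := ⋃ α ∈ Γ, var α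

/-- The left variable inclusion companion of a consequence relation. -/
def LVI {L V : Type*} (var : L → Set V) (vdash : Set L → L → Prop)
    (Γ : Set L) (α : L) : Prop :=
  ∃ Δ ⊆ Γ, varSet var Δ ⊆ var α ∧ vdash Δ α

/-- The pure left variable inclusion companion of a consequence relation. -/
def PLVI {L V : Type*} (var : L → Set V) (vdash : Set L → L → Prop)
    (Γ : Set L) (α : L) : Prop :=
  ∃ Δ ⊆ Γ, Δ.Nonempty ∧ varSet var Δ ⊆ var α ∧ vdash Δ α

theorem mem_varSet {L V : Type*} {var : L → Set V} {Γ : Set L} {α : L} {q : V}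
    (hα : α ∈ Γ) (hq : q ∈ var α) : q ∈ varSet var Γ :=
  Set.mem_biUnion hα hq

/-- A left-inclusion consequence of `{α, β}` lacking some variable of `α` already follows
from `{β}`. -/
theorem LVI.of_notMem_var {L V : Type*} {var : L → Set V} {vdash : Set L → L → Prop}
    {α β γ : L} {p : V} (h : LVI var vdash {α, β} γ) (hp : p ∈ var α) (hpγ : p ∉ var γ) :
    LVI var vdash {β} γ := by
  obtain ⟨Δ, hΔ, hvar, hd⟩ := h
  refine ⟨Δ, fun x hx => ?_, hvar, hd⟩
  rcases hΔ hx with rfl | hxβ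
  · exact absurd (hvar (mem_varSet hx hp)) hpγ
  · exact hxβ

/-- For a monotonic relation, left-inclusion consequences are consequences. -/
theorem LVI.vdash_of_mono {L V : Type*} {var : L → Set V} {vdash : Set L → L → Prop}
    (hmono : ∀ (Γ Δ : Set L) (α : L), vdash Γ α → Γ ⊆ Δ → vdash Δ α)
    {Γ : Set L} {γ : L} (h : LVI var vdash Γ γ) : vdash Γ γ := by
  obtain ⟨Δ, hΔ, -, hd⟩ := h
  exact hmono Δ Γ γ hd hΔ

/-- If a non-theorem is a left-inclusion consequence of `{β}`, it contains all variables
of `β`. -/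
theorem LVI.var_subset_of_not_vdash_empty {L V : Type*} {var : L → Set V}
    {vdash : Set L → L → Prop} {β γ : L} (h : LVI var vdash {β} γ) (hγ : ¬ vdash ∅ γ) :
    var β ⊆ var γ := by
  obtain ⟨Δ, hΔ, hvar, hd⟩ := h
  rcases Set.subset_singleton_iff_eq.mp hΔ with rfl | rfl
  · exact absurd hd hγ
  · exact fun q hq => hvar (mem_varSet rfl hq)

/-- If `⊢` is monotonic and transitive, no variable is a theorem, and there is no
falsity constant, then the left variable inclusion companion is NF-paraconsistent. -/
theorem lvi_nf_paraconsistent_of_mono_transitive {L V : Type*} [Infinite V]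
    (var : L → Set V) (hfin : ∀ α : L, (var α).Finite)
    (ι : V → L) (hι : Function.Injective ι) (hιvar : ∀ q : V, var (ι q) = {q})
    (vdash : Set L → L → Prop)
    (hmono : ∀ (Γ Δ : Set L) (α : L), vdash Γ α → Γ ⊆ Δ → vdash Δ α)
    (htrans : ∀ (Γ Δ : Set L) (α : L), (∀ σ ∈ Δ, vdash Γ σ) → vdash Δ α → vdash Γ α)
    (hvarthm : ∀ q : V, ¬ vdash ∅ (ι q))
    (hnofalsity : ¬ ∃ β : L, var β = ∅ ∧ ∀ γ : L, vdash {β} γ) :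
    ∃ α : L, ∀ β : L, ∃ γ : L, ¬ LVI var vdash {α, β} γ := by
  by_contra! hexp
  have key : ∀ p : V, ∃ β : L, var β = ∅ ∧ (∀ γ, p ∉ var γ → vdash {β} γ) ∧
      ∀ γ, vdash {ι p, β} γ := by
    intro p
    obtain ⟨β, hβ⟩ := hexp (ι p)
    have hpp : p ∈ var (ι p) := by simp [hιvar]
    refine ⟨β, ?_, fun γ hγ => ((hβ γ).of_notMem_var hpp hγ).vdash_of_mono hmono,
      fun γ => (hβ γ).vdash_of_mono hmono⟩
    obtain ⟨q, hq⟩ := ((hfin β).insert p).exists_notMem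
    rw [Set.mem_insert_iff, not_or] at hq
    have hpq : p ∉ var (ι q) := by simpa [hιvar] using Ne.symm hq.1
    have hsub := ((hβ (ι q)).of_notMem_var hpp hpq).var_subset_of_not_vdash_empty (hvarthm q)
    rw [hιvar] at hsub
    refine Set.eq_empty_of_forall_notMem fun r hr => hq.2 ?_
    rwa [← Set.mem_singleton_iff.mp (hsub hr)]
  obtain ⟨p, r, hpr⟩ := exists_pair_ne V
  obtain ⟨β, hβ, hβp, hβall⟩ := key p
  obtain ⟨δ, hδ, hδr, -⟩ := key r
  -- `β` derives the variable-free `δ`, which derives `ι p`.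
  have hp : vdash {β} (ι p) := by
    refine htrans {β} {δ} (ι p) ?_ (hδr _ (by simpa [hιvar] using hpr.symm))
    rintro σ rfl
    exact hβp σ (by simp [hδ])
  refine hnofalsity ⟨β, hβ, fun γ => htrans {β} {ι p, β} γ ?_ (hβall γ)⟩
  rintro σ (rfl | rfl)
  · exact hp
  · exact hβp σ (by simp [hβ])
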